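/- Let N be a positive integer and p a real number with 1 < p and 2p < N. Then every C^∞ compactly supported function φ : ℝ^N → ℝ satisfies the Rellich inequality ∫_{ℝ^N} |φ(x)|^p / |x|^{2p} dx ≤ (p²/(N(p−1)(N−2p)))^p · ∫_{ℝ^N} |Δφ(x)|^p dx, where Δφ denotes the Laplacian of φ. -/

import Mathlib

/-!
Formally, put `A = |φ| ^ p`, `c = (N - 2p) / p`, `k = (2 (p - 1) / p) (1 + c)` and
`K = N (p - 1) (N - 2p) / p²`, and integrate the divergence of the compactly supported field
`|x| ^ (2 - 2p) |φ| ^ (p - 2) φ ∇φ + k A |x| ^ (-2p) x`. The terms with `∇φ` are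
`(p - 1) |φ| ^ (p - 2) |∇φ|² |x| ^ (2 - 2p) + 2 (p - 1) c |φ| ^ (p - 2) φ (x · ∇φ) |x| ^ (-2p)`, which by
Cauchy–Schwarz and completion of the square are at least `-(p - 1) c² A |x| ^ (-2p)` (this is the
weighted Hardy inequality for `|φ| ^ (p / 2)`), while `div (|x| ^ (-2p) x) = (N - 2p) |x| ^ (-2p)`.
Since the divergence has integral zero,
`K ∫ |φ| ^ p |x| ^ (-2p) ≤ ∫ (|φ| / |x|²) ^ (p - 1) |Δφ|`, and Young's inequality finishes the proof.

To make this rigorous, `|x|²` is replaced by `s = |x|² + δ` and `|φ|²` by `φ² + ε`. The error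
terms produced by `δ` have the favourable sign, and those produced by `ε` are either nonnegative
or `O(ε ^ (p / 2))` (`pointwise_bound`, `defect_le_div_flux`). Thus `ε → 0` gives the inequality with
the smoothed weight (`rellich_regularized`), and `δ → 0` follows by dominated convergence; if
`|φ| ^ p / |x| ^ (2p)` were not integrable, its Bochner integral would be `0` and there would be
nothing to prove.
-/

open MeasureTheory

/-- The Laplacian of a function `φ : ℝ^N → ℝ`, as the sum of its pure second
partial derivatives in the coordinate directions. -/
noncomputable def lap {N : ℕ} (φ : EuclideanSpace ℝ (Fin N) → ℝ)
    (x : EuclideanSpace ℝ (Fin N)) : ℝ :=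
  ∑ i : Fin N, iteratedFDeriv ℝ 2 φ x ![EuclideanSpace.single i 1, EuclideanSpace.single i 1]

/-! ### The vector field and its divergence -/

/-- The `i`-th component of the vector field
`s ^ (1 - p) h(φ) ∇φ + k H(φ) s ^ (-p) x`, where `s = |x|² + δ` smooths the weight `|x|²` and
`h(t) = t (t² + ε) ^ (p/2 - 1)`, `H(t) = (t² + ε) ^ (p/2) - ε ^ (p/2)` smooth `|t| ^ (p-2) t` and
`|t| ^ p`. They satisfy `H' = p h` and `h(0) = H(0) = 0`, so the field is `C¹` and supported
in `tsupport φ`. -/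
noncomputable def flux {N : ℕ} (p k δ ε : ℝ) (φ : EuclideanSpace ℝ (Fin N) → ℝ) (i : Fin N)
    (x : EuclideanSpace ℝ (Fin N)) : ℝ :=
  (‖x‖ ^ 2 + δ) ^ (1 - p) * (φ x * (φ x ^ 2 + ε) ^ (p / 2 - 1)) *
      fderiv ℝ φ x (EuclideanSpace.single i 1) +
    k * ((φ x ^ 2 + ε) ^ (p / 2) - ε ^ (p / 2)) * (x i * (‖x‖ ^ 2 + δ) ^ (-p))

lemma integral_fderiv_apply_eq_zero {N : ℕ} {f : EuclideanSpace ℝ (Fin N) → ℝ}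
    (hf : ContDiff ℝ 1 f) (hc : HasCompactSupport f) (v : EuclideanSpace ℝ (Fin N)) :
    ∫ x, fderiv ℝ f x v = 0 := by
  have h1 : Integrable (fun x => fderiv ℝ f x v) :=
    ((hf.continuous_fderiv one_ne_zero).clm_apply continuous_const).integrable_of_hasCompactSupport
      (hc.fderiv_apply (𝕜 := ℝ) v)
  have h2 : Integrable f := hf.continuous.integrable_of_hasCompactSupport hc
  have h := integral_mul_fderiv_eq_neg_fderiv_mul_of_integrable (μ := volume) (f := f)
    (g := fun _ => (1 : ℝ)) (v := v) (by simpa using h1) (by simp) (by simpa using h2)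
    (fun x _ => hf.differentiable one_ne_zero x) (fun x _ => differentiableAt_const _)
  simpa using h

lemma flux_contDiff {N : ℕ} (p k : ℝ) {δ ε : ℝ} (hδ : 0 < δ) (hε : 0 < ε)
    {φ : EuclideanSpace ℝ (Fin N) → ℝ} (hφ : ContDiff ℝ 2 φ) (i : Fin N) :
    ContDiff ℝ 1 (flux p k δ ε φ i) := by
  have hφ1 : ContDiff ℝ 1 φ := hφ.of_le (by norm_num)
  have hd : ContDiff ℝ 1 (fun x => fderiv ℝ φ x (EuclideanSpace.single i 1)) :=
    (hφ.fderiv_right (m := 1) (by norm_num)).clm_apply contDiff_const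
  have hs : ContDiff ℝ 1 (fun x : EuclideanSpace ℝ (Fin N) => ‖x‖ ^ 2 + δ) :=
    (contDiff_norm_sq ℝ).add contDiff_const
  have hq : ContDiff ℝ 1 (fun x => φ x ^ 2 + ε) := (hφ1.pow 2).add contDiff_const
  have hs0 : ∀ x : EuclideanSpace ℝ (Fin N), ‖x‖ ^ 2 + δ ≠ 0 := fun x => by positivity
  have hq0 : ∀ x, φ x ^ 2 + ε ≠ 0 := fun x => by positivity
  have hx : ContDiff ℝ 1 (fun x : EuclideanSpace ℝ (Fin N) => x i) := by fun_prop
  unfold flux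
  exact (((hs.rpow_const_of_ne hs0).mul (hφ1.mul (hq.rpow_const_of_ne hq0))).mul hd).add
    ((contDiff_const.mul ((hq.rpow_const_of_ne hq0).sub contDiff_const)).mul
      (hx.mul (hs.rpow_const_of_ne hs0)))

lemma flux_eq_zero {N : ℕ} (p k δ ε : ℝ) {φ : EuclideanSpace ℝ (Fin N) → ℝ} (i : Fin N)
    {x : EuclideanSpace ℝ (Fin N)} (hx : φ x = 0) : flux p k δ ε φ i x = 0 := by
  simp [flux, hx]

/-- `∂ᵢ` of the `i`-th component of `flux`, with all powers of `s` and `q` written as multiples of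
`s ^ (-p - 1)` and `q ^ (p/2 - 2)`. -/
lemma fderiv_flux {N : ℕ} (p k : ℝ) {δ ε : ℝ} (hδ : 0 < δ) (hε : 0 < ε)
    {φ : EuclideanSpace ℝ (Fin N) → ℝ} (hφ : ContDiff ℝ 2 φ) (i : Fin N)
    (x : EuclideanSpace ℝ (Fin N)) {s q t d L : ℝ}
    (hs : s = ‖x‖ ^ 2 + δ) (ht : t = φ x) (hq : q = t ^ 2 + ε)
    (hd : d = fderiv ℝ φ x (EuclideanSpace.single i 1))
    (hL : L = iteratedFDeriv ℝ 2 φ x ![EuclideanSpace.single i 1, EuclideanSpace.single i 1]) :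
    fderiv ℝ (flux p k δ ε φ i) x (EuclideanSpace.single i 1) =
      2 * (1 - p) * (s ^ (-p - 1) * s) * (t * (q ^ (p / 2 - 2) * q)) * (x i * d)
      + s ^ (-p - 1) * s ^ 2 * (q ^ (p / 2 - 2) * ((p - 1) * t ^ 2 + ε)) * d ^ 2
      + s ^ (-p - 1) * s ^ 2 * (t * (q ^ (p / 2 - 2) * q)) * L
      + k * (p * (t * (q ^ (p / 2 - 2) * q)) * (s ^ (-p - 1) * s) * (x i * d)
        + (q ^ (p / 2) - ε ^ (p / 2)) * (s ^ (-p - 1) * s)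
        - 2 * p * (q ^ (p / 2) - ε ^ (p / 2)) * s ^ (-p - 1) * (x i) ^ 2) := by
  have hs0 : 0 < s := by rw [hs]; positivity
  have hq0 : 0 < q := by rw [hq]; positivity
  set e : EuclideanSpace ℝ (Fin N) := EuclideanSpace.single i 1 with he
  -- restrict every factor to the line `x + r e`
  have hφd : HasDerivAt (fun r : ℝ => φ (x + r • e)) d 0 := by
    rw [hd]
    exact (hφ.differentiable (by norm_num) x).hasFDerivAt.hasLineDerivAt e
  have hdd : HasDerivAt (fun r : ℝ => fderiv ℝ φ (x + r • e) e) L 0 := by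
    have h1 : HasFDerivAt (fderiv ℝ φ) (fderiv ℝ (fderiv ℝ φ) x) x :=
      ((hφ.fderiv_right (m := 1) (by norm_num)).differentiable (by norm_num) x).hasFDerivAt
    have h2 := (h1.hasLineDerivAt e)
    have h3 := HasDerivAt.clm_apply h2 (hasDerivAt_const (0 : ℝ) e)
    rw [hL, iteratedFDeriv_two_apply]
    simpa using h3
  have hxd : HasDerivAt (fun r : ℝ => (x + r • e) i) 1 0 := by
    have : (fun r : ℝ => (x + r • e) i) = fun r : ℝ => x i + r := by
      funext r; simp [he]
    rw [this]
    simpa using (hasDerivAt_id (0 : ℝ)).const_add (x i)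
  have hsd : HasDerivAt (fun r : ℝ => ‖x + r • e‖ ^ 2 + δ) (2 * x i) 0 := by
    have : (fun r : ℝ => ‖x + r • e‖ ^ 2 + δ) = fun r : ℝ => ‖x‖ ^ 2 + 2 * r * x i + r ^ 2 + δ := by
      funext r
      rw [norm_add_sq_real, inner_smul_right, norm_smul]
      simp [he, EuclideanSpace.inner_single_right]
      ring
    rw [this]
    have := (((((hasDerivAt_id (0 : ℝ)).const_mul 2).mul_const (x i)).const_add (‖x‖ ^ 2)).add
      ((hasDerivAt_id (0 : ℝ)).pow 2)).add_const δ
    simpa using this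
  have e0 : x + (0 : ℝ) • e = x := by simp
  have hqd : HasDerivAt (fun r : ℝ => φ (x + r • e) ^ 2 + ε) (2 * t * d) 0 := by
    have := (hφd.pow 2).add_const ε
    simpa [← ht] using this
  have hs1 : ‖x + (0 : ℝ) • e‖ ^ 2 + δ ≠ 0 := by rw [e0, ← hs]; exact hs0.ne'
  have hq1 : φ (x + (0 : ℝ) • e) ^ 2 + ε ≠ 0 := by rw [e0, ← ht, ← hq]; exact hq0.ne'
  have A := ((hsd.rpow_const (p := 1 - p) (Or.inl hs1)).mul
    (hφd.mul (hqd.rpow_const (p := p / 2 - 1) (Or.inl hq1)))).mul hdd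
  have B := (((hqd.rpow_const (p := p / 2) (Or.inl hq1)).sub_const (ε ^ (p / 2))).const_mul k).mul
    (hxd.mul (hsd.rpow_const (p := -p) (Or.inl hs1)))
  have C : HasLineDerivAt ℝ (flux p k δ ε φ i) _ x e := A.add B
  have F := ((flux_contDiff p k hδ hε hφ i).differentiable one_ne_zero x).hasFDerivAt.hasLineDerivAt e
  have U := HasDerivAt.unique F C
  rw [U]
  simp only [Pi.mul_apply, e0, ← hs, ← ht, ← hq, ← hd]
  have r1 : s ^ (1 - p - 1) = s ^ (-p - 1) * s := by
    rw [← Real.rpow_add_one hs0.ne']; congr 1; ring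
  have r2 : s ^ (1 - p) = s ^ (-p - 1) * s ^ 2 := by
    rw [← Real.rpow_natCast, ← Real.rpow_add hs0]; congr 1; push_cast; ring
  have r3 : s ^ (-p) = s ^ (-p - 1) * s := by
    rw [← Real.rpow_add_one hs0.ne']; congr 1; ring
  have r4 : q ^ (p / 2 - 1) = q ^ (p / 2 - 2) * q := by
    rw [← Real.rpow_add_one hq0.ne']; congr 1; ring
  have r5 : q ^ (p / 2 - 1 - 1) = q ^ (p / 2 - 2) := by congr 1; ring
  rw [r1, r2, r3, r4, r5]
  have : ε = q - t ^ 2 := by rw [hq]; ring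
  generalize q ^ (p / 2) - ε ^ (p / 2) = H
  rw [this]
  ring

/-- The algebra behind the lower bound on the divergence of `flux`. Here `s = |x|² + δ`,
`w = s ^ (-p - 1)`, `q = φ² + ε`, `n = q ^ (p/2 - 2)`, `r = |x|²`, `D = x · ∇φ`, `G = |∇φ|²`, `L = Δφ`,
`H + e = q ^ (p/2)` and `e = ε ^ (p/2)`. The difference of the two sides is a sum of three
nonnegative terms: the Cauchy–Schwarz deficit `s G - D²`, a perfect square in `t D + c q` (plus
`ε D²`), and the contribution of `δ` to the divergence of `s ^ (-p) x`. The choice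
`c = (N - 2p) / p` maximizes the constant `k (N - 2p) - (p - 1) c²`, which is then `K`. -/
lemma pointwise_bound {p N k c K w n s q t ε r δ D G L H e : ℝ} (hp : 1 < p) (hpN : 2 * p < N)
    (hc : c = (N - 2 * p) / p) (hk : k = 2 * (p - 1) / p * (1 + c))
    (hK : K = N * (p - 1) * (N - 2 * p) / p ^ 2)
    (hw : 0 ≤ w) (hn : 0 ≤ n) (hs : s = r + δ) (hr : 0 ≤ r) (hδ : 0 ≤ δ)
    (hε : 0 ≤ ε) (hD : D ^ 2 ≤ r * G) (hG : 0 ≤ G) (hH : 0 ≤ H) (hHe : n * q ^ 2 = H + e) :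
    w * s ^ 2 * (t * (n * q)) * L + w * s * (K * H - (p - 1) * c ^ 2 * e) ≤
      2 * (1 - p) * (w * s) * (t * (n * q)) * D
      + w * s ^ 2 * (n * ((p - 1) * t ^ 2 + ε)) * G
      + w * s ^ 2 * (t * (n * q)) * L
      + k * (p * (t * (n * q)) * (w * s) * D + N * (H * (w * s)) - 2 * p * H * w * r) := by
  have hp0 : 0 < p := by linarith
  have hc0 : 0 < c := by rw [hc]; exact div_pos (by linarith) hp0
  have hk0 : 0 < k := by rw [hk]; have : 0 < p - 1 := by linarith
                         positivity
  have hs0 : 0 ≤ s := by rw [hs]; positivity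
  have hkp : k * p = 2 * (p - 1) * (1 + c) := by rw [hk]; field_simp
  have hKk : K = k * (N - 2 * p) - (p - 1) * c ^ 2 := by
    rw [hK, hk, hc]; field_simp; ring
  have hp1 : 0 ≤ p - 1 := by linarith
  have a1 : 0 ≤ w * s * (n * ((p - 1) * t ^ 2 + ε)) * (s * G - D ^ 2) := by
    have : 0 ≤ s * G - D ^ 2 := by rw [hs]; nlinarith [mul_nonneg hδ hG]
    positivity
  have a2 : 0 ≤ w * s * (n * ((p - 1) * (t * D + c * q) ^ 2 + ε * D ^ 2)) := by positivity
  have a3 : 0 ≤ k * (2 * p * H * w * δ) := by positivity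
  have e1 : H = n * q ^ 2 - e := by linarith
  have hr' : r = s - δ := by linarith
  have id : (2 * (1 - p) * (w * s) * (t * (n * q)) * D
      + w * s ^ 2 * (n * ((p - 1) * t ^ 2 + ε)) * G
      + w * s ^ 2 * (t * (n * q)) * L
      + k * (p * (t * (n * q)) * (w * s) * D + N * (H * (w * s)) - 2 * p * H * w * r))
      - (w * s ^ 2 * (t * (n * q)) * L + w * s * (K * H - (p - 1) * c ^ 2 * e))
      = w * s * (n * ((p - 1) * t ^ 2 + ε)) * (s * G - D ^ 2)
      + w * s * (n * ((p - 1) * (t * D + c * q) ^ 2 + ε * D ^ 2))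
      + k * (2 * p * H * w * δ) := by
    rw [hKk, hr']
    linear_combination (t * (n * q)) * (w * s) * D * hkp - w * s * (p - 1) * c ^ 2 * hHe
  linarith
lemma lap_continuous {N : ℕ} {φ : EuclideanSpace ℝ (Fin N) → ℝ} (hφ : ContDiff ℝ 2 φ) :
    Continuous (lap φ) := by
  unfold lap
  refine continuous_finsetSum _ fun i _ => ?_
  exact (ContinuousMultilinearMap.apply ℝ (fun _ : Fin 2 => EuclideanSpace ℝ (Fin N)) ℝ
    ![EuclideanSpace.single i 1, EuclideanSpace.single i 1]).continuous.comp
    (hφ.continuous_iteratedFDeriv le_rfl)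

lemma lap_eq_zero {N : ℕ} {φ : EuclideanSpace ℝ (Fin N) → ℝ} {x : EuclideanSpace ℝ (Fin N)}
    (hx : x ∉ tsupport φ) : lap φ x = 0 := by
  have : iteratedFDeriv ℝ 2 φ x = 0 := by
    by_contra h
    exact hx (support_iteratedFDeriv_subset (𝕜 := ℝ) 2 h)
  simp [lap, this]

/-! ### The integral inequality for the smoothed weight -/

/-- The lower bound for the divergence of `flux`, with `C = (p - 1) c²`; its integral over
`tsupport φ` is therefore nonpositive for `ε > 0`. All the powers depending on `ε` have positive
exponents, so that it is jointly continuous in `(ε, x)` up to `ε = 0`, where it equals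
`K |φ| ^ p s ^ (-p) - s ^ (1 - p) |φ| ^ (p - 1) |Δφ|`. -/
noncomputable def defect {N : ℕ} (p δ K C : ℝ) (φ : EuclideanSpace ℝ (Fin N) → ℝ) (ε : ℝ)
    (x : EuclideanSpace ℝ (Fin N)) : ℝ :=
  (‖x‖ ^ 2 + δ) ^ (-p) * (K * ((φ x ^ 2 + ε) ^ (p / 2) - ε ^ (p / 2)) - C * ε ^ (p / 2)) -
    (‖x‖ ^ 2 + δ) ^ (1 - p) * (φ x ^ 2 + ε) ^ ((p - 1) / 2) * |lap φ x|

lemma defect_continuous {N : ℕ} {p δ : ℝ} (K C : ℝ) (hp : 1 < p) (hδ : 0 < δ)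
    {φ : EuclideanSpace ℝ (Fin N) → ℝ} (hφ : ContDiff ℝ 2 φ) :
    Continuous (Function.uncurry (defect p δ K C φ)) := by
  have hl : Continuous fun z : ℝ × EuclideanSpace ℝ (Fin N) => |lap φ z.2| :=
    ((lap_continuous hφ).comp continuous_snd).abs
  have hf : Continuous fun z : ℝ × EuclideanSpace ℝ (Fin N) => φ z.2 ^ 2 + z.1 :=
    ((hφ.continuous.comp continuous_snd).pow 2).add continuous_fst
  have hs : Continuous fun z : ℝ × EuclideanSpace ℝ (Fin N) => ‖z.2‖ ^ 2 + δ := by fun_prop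
  have hs0 : ∀ z : ℝ × EuclideanSpace ℝ (Fin N), ‖z.2‖ ^ 2 + δ ≠ 0 := fun z => by positivity
  have h1 := hs.rpow_const (p := -p) fun z => Or.inl (hs0 z)
  have h2 := hs.rpow_const (p := 1 - p) fun z => Or.inl (hs0 z)
  have h3 := hf.rpow_const (p := p / 2) fun z => Or.inr (by linarith)
  have h4 := hf.rpow_const (p := (p - 1) / 2) fun z => Or.inr (by linarith)
  have h5 : Continuous fun z : ℝ × EuclideanSpace ℝ (Fin N) => z.1 ^ (p / 2) :=
    continuous_fst.rpow_const fun z => Or.inr (by linarith)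
  exact (h1.mul ((continuous_const.mul (h3.sub h5)).sub (continuous_const.mul h5))).sub
    ((h2.mul h4).mul hl)

/-- `pointwise_bound` applied to the divergence of `flux`, the term `h(φ) Δφ` being estimated by
`|h(t)| ≤ (t² + ε) ^ ((p - 1) / 2)`. -/
lemma defect_le_div_flux {N : ℕ} {p c k K δ ε : ℝ} (hp : 1 < p) (hpN : 2 * p < (N : ℝ))
    (hc : c = ((N : ℝ) - 2 * p) / p) (hk : k = 2 * (p - 1) / p * (1 + c))
    (hK : K = (N : ℝ) * (p - 1) * ((N : ℝ) - 2 * p) / p ^ 2) (hδ : 0 < δ) (hε : 0 < ε)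
    {φ : EuclideanSpace ℝ (Fin N) → ℝ} (hφ : ContDiff ℝ 2 φ) (x : EuclideanSpace ℝ (Fin N)) :
    defect p δ K ((p - 1) * c ^ 2) φ ε x ≤
      ∑ i, fderiv ℝ (flux p k δ ε φ i) x (EuclideanSpace.single i 1) := by
  obtain ⟨t, ht⟩ : ∃ t, t = φ x := ⟨_, rfl⟩
  obtain ⟨s, hs⟩ : ∃ s, s = ‖x‖ ^ 2 + δ := ⟨_, rfl⟩
  obtain ⟨q, hq⟩ : ∃ q, q = t ^ 2 + ε := ⟨_, rfl⟩
  have hs0 : 0 < s := by rw [hs]; positivity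
  have hq0 : 0 < q := by rw [hq]; positivity
  rw [Finset.sum_congr rfl fun i _ => fderiv_flux p k hδ hε hφ i x hs ht hq rfl rfl]
  simp only [Finset.sum_add_distrib, ← Finset.mul_sum, Finset.sum_sub_distrib, Finset.sum_const,
    Finset.card_univ, Fintype.card_fin, nsmul_eq_mul]
  have hr : ∑ i, (x i) ^ 2 = ‖x‖ ^ 2 := by
    rw [EuclideanSpace.norm_sq_eq]; simp
  rw [hr]
  change _ ≤ _ + _ + s ^ (-p - 1) * s ^ 2 * (t * (q ^ (p / 2 - 2) * q)) * lap φ x + _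
  have hCS := Finset.sum_mul_sq_le_sq_mul_sq Finset.univ (fun i => x i)
    (fun i => fderiv ℝ φ x (EuclideanSpace.single i 1))
  rw [hr] at hCS
  have hH : 0 ≤ q ^ (p / 2) - ε ^ (p / 2) := by
    rw [sub_nonneg]
    exact Real.rpow_le_rpow hε.le (by rw [hq]; nlinarith [sq_nonneg t]) (by linarith)
  have hqq : q ^ (p / 2 - 2) * q ^ 2 = (q ^ (p / 2) - ε ^ (p / 2)) + ε ^ (p / 2) := by
    rw [← Real.rpow_natCast, ← Real.rpow_add hq0, sub_add_cancel]; congr 1; push_cast; ring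
  have hb := pointwise_bound (w := s ^ (-p - 1)) (t := t) (ε := ε) (L := lap φ x) hp hpN hc hk hK
    (by positivity) (by positivity : 0 ≤ q ^ (p / 2 - 2))
    hs (by positivity) hδ.le hε.le hCS (Finset.sum_nonneg fun i _ => sq_nonneg _) hH hqq
  refine le_trans ?_ (hb.trans_eq (by ring))
  have r2 : s ^ (1 - p) = s ^ (-p - 1) * s ^ 2 := by
    rw [← Real.rpow_natCast, ← Real.rpow_add hs0]; congr 1; push_cast; ring
  have r3 : s ^ (-p) = s ^ (-p - 1) * s := by
    rw [← Real.rpow_add_one hs0.ne']; congr 1; ring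
  have r4 : q ^ (p / 2 - 2) * q = q ^ (p / 2 - 1) := by
    rw [← Real.rpow_add_one hq0.ne']; congr 1; ring
  have r5 : q ^ ((p - 1) / 2) = q ^ (1 / 2 : ℝ) * q ^ (p / 2 - 1) := by
    rw [← Real.rpow_add hq0]; congr 1; ring
  have htq : |t| ≤ q ^ (1 / 2 : ℝ) := by
    rw [← Real.sqrt_eq_rpow]
    exact Real.abs_le_sqrt (by rw [hq]; linarith)
  have hlow : -(q ^ ((p - 1) / 2) * |lap φ x|) ≤ t * q ^ (p / 2 - 1) * lap φ x := by
    refine le_trans (neg_le_neg ?_) (neg_abs_le _)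
    rw [abs_mul, abs_mul, abs_of_nonneg (Real.rpow_nonneg hq0.le (p / 2 - 1)), r5]
    gcongr
  have := mul_le_mul_of_nonneg_left hlow (by positivity : 0 ≤ s ^ (-p - 1) * s ^ 2)
  unfold defect
  rw [← hs, ← ht, ← hq, r2, r3, r4]
  linarith

lemma setIntegral_defect_nonpos {N : ℕ} {p c K δ ε : ℝ} (hp : 1 < p) (hpN : 2 * p < (N : ℝ))
    (hc : c = ((N : ℝ) - 2 * p) / p)
    (hK : K = (N : ℝ) * (p - 1) * ((N : ℝ) - 2 * p) / p ^ 2) (hδ : 0 < δ) (hε : 0 < ε)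
    {φ : EuclideanSpace ℝ (Fin N) → ℝ} (hφ : ContDiff ℝ 2 φ) (hsupp : HasCompactSupport φ) :
    ∫ x in tsupport φ, defect p δ K ((p - 1) * c ^ 2) φ ε x ≤ 0 := by
  obtain ⟨k, hk⟩ : ∃ k, k = 2 * (p - 1) / p * (1 + c) := ⟨_, rfl⟩
  have hsub : ∀ i, tsupport (flux p k δ ε φ i) ⊆ tsupport φ := fun i =>
    closure_mono fun x hx h0 => hx (flux_eq_zero p k δ ε i h0)
  have hcs : ∀ i, HasCompactSupport (flux p k δ ε φ i) := fun i =>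
    hsupp.of_isClosed_subset (isClosed_tsupport _) (hsub i)
  have hcd : ∀ i, ContDiff ℝ 1 (flux p k δ ε φ i) := fun i => flux_contDiff p k hδ hε hφ i
  have hcont : ∀ i, Continuous fun x =>
      fderiv ℝ (flux p k δ ε φ i) x (EuclideanSpace.single i 1) := fun i =>
    ((hcd i).continuous_fderiv one_ne_zero).clm_apply continuous_const
  have hzero : ∫ x in tsupport φ,
      ∑ i, fderiv ℝ (flux p k δ ε φ i) x (EuclideanSpace.single i 1) = 0 := by
    rw [setIntegral_eq_integral_of_forall_compl_eq_zero, integral_finsetSum]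
    · exact Finset.sum_eq_zero fun i _ => integral_fderiv_apply_eq_zero (hcd i) (hcs i) _
    · exact fun i _ => (hcont i).integrable_of_hasCompactSupport ((hcs i).fderiv_apply (𝕜 := ℝ) _)
    · intro x hx
      refine Finset.sum_eq_zero fun i _ => ?_
      rw [fderiv_of_notMem_tsupport (𝕜 := ℝ) fun h => hx (hsub i h)]
      rfl
  rw [← hzero]
  refine setIntegral_mono ?_ ?_ fun x => defect_le_div_flux hp hpN hc hk hK hδ hε hφ x
  · exact ((defect_continuous K _ hp hδ hφ).comp
      (Continuous.prodMk_right ε)).continuousOn.integrableOn_compact hsupp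
  · exact (continuous_finsetSum _ fun i _ => hcont i).continuousOn.integrableOn_compact hsupp

/-- Rellich's inequality with the weight `|x|²` replaced by `|x|² + δ`: let `ε → 0⁺` in
`setIntegral_defect_nonpos`, then absorb the term containing `Δφ` by Young's inequality. -/
lemma rellich_regularized {N : ℕ} {p K δ : ℝ} (hp : 1 < p) (hpN : 2 * p < (N : ℝ))
    (hK : K = (N : ℝ) * (p - 1) * ((N : ℝ) - 2 * p) / p ^ 2) (hδ : 0 < δ)
    {φ : EuclideanSpace ℝ (Fin N) → ℝ} (hφ : ContDiff ℝ 2 φ) (hsupp : HasCompactSupport φ) :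
    ∫ x, |φ x| ^ p * (‖x‖ ^ 2 + δ) ^ (-p) ≤ K⁻¹ ^ p * ∫ x, |lap φ x| ^ p := by
  have hp0 : 0 < p := by linarith
  have hK0 : 0 < K := by
    rw [hK]
    have h1 : 0 < p - 1 := by linarith
    have h2 : 0 < (N : ℝ) - 2 * p := by linarith
    have h3 : 0 < (N : ℝ) := by linarith
    positivity
  obtain ⟨c, hc⟩ : ∃ c, c = ((N : ℝ) - 2 * p) / p := ⟨_, rfl⟩
  have hcont := defect_continuous K ((p - 1) * c ^ 2) hp hδ hφ
  -- let `ε → 0⁺`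
  have h0 : ∫ x in tsupport φ, defect p δ K ((p - 1) * c ^ 2) φ 0 x ≤ 0 := by
    have hlim := ((continuous_parametric_integral_of_continuous (μ := volume) hcont
      hsupp).tendsto 0).mono_left (nhdsWithin_le_nhds (s := Set.Ioi (0 : ℝ)))
    refine le_of_tendsto hlim ?_
    filter_upwards [self_mem_nhdsWithin] with ε hε
    exact setIntegral_defect_nonpos hp hpN hc hK hδ hε hφ hsupp
  have cA : Continuous fun x => |φ x| ^ p * (‖x‖ ^ 2 + δ) ^ (-p) := by
    refine (hφ.continuous.abs.rpow_const fun x => Or.inr hp0.le).mul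
      (Continuous.rpow_const (by fun_prop) fun x => Or.inl (by positivity))
  have cB : Continuous fun x => K⁻¹ ^ p * |lap φ x| ^ p :=
    continuous_const.mul ((lap_continuous hφ).abs.rpow_const fun x => Or.inr hp0.le)
  have hpt : ∀ x, K / p * (|φ x| ^ p * (‖x‖ ^ 2 + δ) ^ (-p) - K⁻¹ ^ p * |lap φ x| ^ p) ≤
      defect p δ K ((p - 1) * c ^ 2) φ 0 x := by
    intro x
    obtain ⟨s, hs⟩ : ∃ s, s = ‖x‖ ^ 2 + δ := ⟨_, rfl⟩
    have hs0 : 0 < s := by rw [hs]; positivity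
    obtain ⟨a, ha⟩ : ∃ a, a = |φ x| / s := ⟨_, rfl⟩
    have ha0 : 0 ≤ a := by rw [ha]; positivity
    have e1 : |φ x| ^ p * s ^ (-p) = a ^ p := by
      rw [ha, Real.div_rpow (abs_nonneg _) hs0.le, Real.rpow_neg hs0.le]; rfl
    have e2 : s ^ (1 - p) * |φ x| ^ (p - 1) = a ^ (p - 1) := by
      rw [ha, Real.div_rpow (abs_nonneg _) hs0.le, show 1 - p = -(p - 1) by ring,
        Real.rpow_neg hs0.le, mul_comm]; rfl
    have e3 : ∀ y : ℝ, (φ x ^ 2 + 0) ^ (y / 2) = |φ x| ^ y := by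
      intro y
      rw [add_zero, ← sq_abs, ← Real.rpow_natCast, ← Real.rpow_mul (abs_nonneg _)]
      congr 1; push_cast; ring
    have hconj : (p / (p - 1)).HolderConjugate p :=
      (Real.HolderConjugate.conjExponent hp).symm
    -- the factor `K⁻¹` makes Young's inequality yield exactly the constant `K⁻¹ ^ p`
    have hy := Real.young_inequality_of_nonneg (a := a ^ (p - 1)) (b := K⁻¹ * |lap φ x|)
      (by positivity) (by positivity) hconj
    have hp1 : p - 1 ≠ 0 := by linarith
    rw [← Real.rpow_mul ha0, mul_div_cancel₀ _ hp1,
      Real.mul_rpow (by positivity) (abs_nonneg _)] at hy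
    have hy2 := mul_le_mul_of_nonneg_left hy hK0.le
    unfold defect
    rw [← hs, e1, e3, e3, e2, Real.zero_rpow (by positivity), sub_zero, mul_zero, sub_zero]
    have e4 : s ^ (-p) * (K * |φ x| ^ p) = K * a ^ p := by rw [← e1]; ring
    have e5 : K * (a ^ (p - 1) * (K⁻¹ * |lap φ x|)) = a ^ (p - 1) * |lap φ x| := by
      field_simp
    rw [e4]
    rw [e5] at hy2
    have e6 : K * (a ^ p / (p / (p - 1)) + K⁻¹ ^ p * |lap φ x| ^ p / p) =
        K * a ^ p - K / p * (a ^ p - K⁻¹ ^ p * |lap φ x| ^ p) := by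
      field_simp; ring
    linarith
  have hint : ∫ x in tsupport φ,
      K / p * (|φ x| ^ p * (‖x‖ ^ 2 + δ) ^ (-p) - K⁻¹ ^ p * |lap φ x| ^ p) ≤
      ∫ x in tsupport φ, defect p δ K ((p - 1) * c ^ 2) φ 0 x := setIntegral_mono
    ((continuous_const.mul (cA.sub cB)).continuousOn.integrableOn_compact hsupp)
    ((hcont.comp (Continuous.prodMk_right 0)).continuousOn.integrableOn_compact hsupp) hpt
  rw [integral_const_mul, integral_sub (cA.continuousOn.integrableOn_compact hsupp)
    (cB.continuousOn.integrableOn_compact hsupp), integral_const_mul,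
    setIntegral_eq_integral_of_forall_compl_eq_zero,
    setIntegral_eq_integral_of_forall_compl_eq_zero] at hint
  · have := hint.trans h0
    have h2 : 0 < K / p := by positivity
    nlinarith
  · intro x hx
    rw [lap_eq_zero hx, abs_zero, Real.zero_rpow hp0.ne']
  · intro x hx
    rw [image_eq_zero_of_notMem_tsupport hx, abs_zero, Real.zero_rpow hp0.ne', zero_mul]

/-! ### Removing the smoothing of the weight -/

/-- Rellich inequality on `ℝ^N` for smooth compactly supported functions. -/
theorem rellich_inequality (N : ℕ) (hN : 0 < N) (p : ℝ) (hp : 1 < p)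
    (hpN : 2 * p < (N : ℝ))
    (φ : EuclideanSpace ℝ (Fin N) → ℝ) (hφ : ContDiff ℝ (⊤ : ℕ∞) φ)
    (hsupp : HasCompactSupport φ) :
    ∫ x : EuclideanSpace ℝ (Fin N), |φ x| ^ p / ‖x‖ ^ (2 * p) ≤
      (p ^ 2 / ((N : ℝ) * (p - 1) * ((N : ℝ) - 2 * p))) ^ p *
        ∫ x : EuclideanSpace ℝ (Fin N), |lap φ x| ^ p := by
  have hp0 : 0 < p := by linarith
  have hφ2 : ContDiff ℝ 2 φ := hφ.of_le (WithTop.coe_le_coe.mpr le_top)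
  obtain ⟨K, hK⟩ : ∃ K : ℝ, K = (N : ℝ) * (p - 1) * ((N : ℝ) - 2 * p) / p ^ 2 := ⟨_, rfl⟩
  have hKinv : p ^ 2 / ((N : ℝ) * (p - 1) * ((N : ℝ) - 2 * p)) = K⁻¹ := by rw [hK, inv_div]
  rw [hKinv]
  by_cases hI : Integrable fun x : EuclideanSpace ℝ (Fin N) => |φ x| ^ p / ‖x‖ ^ (2 * p)
  swap
  · -- the Bochner integral of a non-integrable function is `0`
    rw [integral_undef hI, ← hKinv]
    have h1 : 0 < p - 1 := by linarith
    have h2 : 0 < (N : ℝ) - 2 * p := by linarith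
    exact mul_nonneg (by positivity) (integral_nonneg fun x => by positivity)
  have : Nonempty (Fin N) := ⟨⟨0, hN⟩⟩
  have hne : ∀ᵐ x : EuclideanSpace ℝ (Fin N), x ≠ 0 := by
    simp [ae_iff]
  have hpow : ∀ x : EuclideanSpace ℝ (Fin N),
      |φ x| ^ p / ‖x‖ ^ (2 * p) = |φ x| ^ p * (‖x‖ ^ 2) ^ (-p) := by
    intro x
    rw [Real.rpow_neg (by positivity), ← Real.rpow_natCast, ← Real.rpow_mul (norm_nonneg _)]
    rfl
  have hlim : Filter.Tendsto
      (fun δ : ℝ => ∫ x : EuclideanSpace ℝ (Fin N), |φ x| ^ p * (‖x‖ ^ 2 + δ) ^ (-p))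
      (nhdsWithin 0 (Set.Ioi 0))
      (nhds (∫ x : EuclideanSpace ℝ (Fin N), |φ x| ^ p / ‖x‖ ^ (2 * p))) := by
    -- the singular integrand itself dominates, since `s ^ (-p)` decreases in `δ`
    refine tendsto_integral_filter_of_dominated_convergence _ ?_ ?_ hI ?_
    · filter_upwards [self_mem_nhdsWithin] with δ hδ
      have hδ : 0 < δ := hδ
      exact ((hφ.continuous.abs.rpow_const fun x => Or.inr hp0.le).mul
        (Continuous.rpow_const (by fun_prop) fun x => Or.inl (by positivity))).aestronglyMeasurable
    · filter_upwards [self_mem_nhdsWithin] with δ hδ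
      have hδ : 0 < δ := hδ
      filter_upwards [hne] with x hx
      have hx' : 0 < ‖x‖ := norm_pos_iff.mpr hx
      rw [Real.norm_of_nonneg (by positivity), hpow]
      exact mul_le_mul_of_nonneg_left
        (Real.rpow_le_rpow_of_nonpos (by positivity) (by linarith) (by linarith)) (by positivity)
    · filter_upwards [hne] with x hx
      have hx' : 0 < ‖x‖ := norm_pos_iff.mpr hx
      rw [hpow]
      refine Filter.Tendsto.mono_left ?_ nhdsWithin_le_nhds
      have hc : ContinuousAt (fun δ : ℝ => |φ x| ^ p * (‖x‖ ^ 2 + δ) ^ (-p)) 0 := by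
        refine continuousAt_const.mul (ContinuousAt.rpow_const (by fun_prop) (Or.inl ?_))
        positivity
      simpa [ContinuousAt] using hc
  refine le_of_tendsto hlim ?_
  filter_upwards [self_mem_nhdsWithin] with δ hδ
  exact rellich_regularized hp hpN hK hδ hφ2 hsupp
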